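/- Let ρ₀ be a d×d complex matrix with Tr(ρ₀) = 1, let P be a d×d Hermitian projection with Tr(P) = 1, and let η be real. On the triple system with indices (i, j, c) ∈ {1,…,d} × {1,…,d} × {0,1}, define: the control state ρ_c = v v† with v = e₀ − η e₁ ∈ ℂ²; the controlled-swap unitary U with entries U_{(i,j,c),(i',j',c')} = [c = c']·( [c = 0]·[i = i'][j = j'] + [c = 1]·[i = j'][j = i'] ); and M = U (ρ₀ ⊗ P ⊗ ρ_c) U†. Let N be the partial trace of M over the second (ancilla) factor, N_{(i,c),(i',c')} = ∑_j M_{(i,j,c),(i',j,c')}, and let the post-measurement matrix be the ⟨+|·|+⟩ sandwich of N over the control factor: F_{i i'} = (1/2) ∑_{c,c'} N_{(i,c),(i',c')}. Then F = (1/2)( ρ₀ − η(ρ₀ P + P ρ₀) + η² P ). -/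

import Mathlib

open Matrix

/-- The controlled-swap unitary on system ⊗ ancilla ⊗ control: it acts as the identity
when the control index is `0` and swaps the first two factors when the control index is `1`. -/
def cswap (d : ℕ) : Matrix (Fin d × Fin d × Fin 2) (Fin d × Fin d × Fin 2) ℂ :=
  Matrix.of fun p q =>
    if p.2.2 = q.2.2 then
      (if p.2.2 = 0 then (if p.1 = q.1 ∧ p.2.1 = q.2.1 then 1 else 0)
       else (if p.1 = q.2.1 ∧ p.2.1 = q.1 then 1 else 0))
    else 0

open scoped Kronecker

/-!
Conjugating by the controlled swap permutes indices, so each control block `(c, c')` of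
`ρ ⊗ σ ⊗ τ` can be traced over the ancilla separately. When neither side or both sides are swapped,
the sum over `j` is a trace; when exactly one side is swapped, it is a matrix product.
-/

namespace ControlledSwap

variable {n R : Type*}

theorem permMatrix_mul_mul_conjTranspose [Fintype n] [DecidableEq n] [NonAssocSemiring R]
    [StarRing R] (e : Equiv.Perm n) (M : Matrix n n R) :
    e.permMatrix R * M * (e.permMatrix R)ᴴ = M.submatrix e e := by
  rw [conjTranspose_permMatrix, PEquiv.toMatrix_toPEquiv_mul, PEquiv.mul_toMatrix_toPEquiv,
    submatrix_submatrix]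
  rfl

/-- The permutation of the basis indices `(i, j, c)` underlying the controlled swap, over an
arbitrary index type for the two swapped factors. -/
def indexPerm (n : Type*) : Equiv.Perm (n × n × Fin 2) :=
  Function.Involutive.toPerm (fun p => if p.2.2 = 0 then p else (p.2.1, p.1, p.2.2))
    fun p => by dsimp only; split_ifs <;> simp_all

@[simp]
theorem indexPerm_zero (i j : n) : indexPerm n (i, j, 0) = (i, j, 0) := rfl

@[simp]
theorem indexPerm_one (i j : n) : indexPerm n (i, j, 1) = (j, i, 1) := rfl

theorem cswap_eq_permMatrix (d : ℕ) : cswap d = (indexPerm (Fin d)).permMatrix ℂ := by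
  ext ⟨i, j, c⟩ ⟨i', j', c'⟩
  fin_cases c <;> fin_cases c' <;>
    simp [cswap, Equiv.Perm.permMatrix, PEquiv.toMatrix_apply, and_comm, eq_comm]

/-- The partial trace over the second (ancilla) factor of a tripartite matrix, curried so that
`traceAncilla M c c'` is its `(c, c')` block with respect to the third (control) factor. -/
def traceAncilla {l l' k k' : Type*} [Fintype n] [AddCommMonoid R]
    (M : Matrix (l × n × k) (l' × n × k') R) (c : k) (c' : k') : Matrix l l' R :=
  of fun i i' => ∑ j, M (i, j, c) (i', j, c')

variable [Fintype n] [CommSemiring R] (ρ σ : Matrix n n R) (τ : Matrix (Fin 2) (Fin 2) R)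

theorem traceAncilla_kronecker_indexPerm_zero_zero :
    traceAncilla ((ρ ⊗ₖ (σ ⊗ₖ τ)).submatrix (indexPerm n) (indexPerm n)) 0 0 =
      τ 0 0 • σ.trace • ρ := by
  ext i i'
  simp only [traceAncilla, of_apply, submatrix_apply, indexPerm_zero, kronecker_apply,
    Matrix.smul_apply, smul_eq_mul, trace, diag_apply, Finset.sum_mul, Finset.mul_sum]
  exact Finset.sum_congr rfl fun j _ => by ring

theorem traceAncilla_kronecker_indexPerm_zero_one :
    traceAncilla ((ρ ⊗ₖ (σ ⊗ₖ τ)).submatrix (indexPerm n) (indexPerm n)) 0 1 =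
      τ 0 1 • (ρ * σ) := by
  ext i i'
  simp only [traceAncilla, of_apply, submatrix_apply, indexPerm_zero, indexPerm_one,
    kronecker_apply, Matrix.smul_apply, smul_eq_mul, mul_apply, Finset.mul_sum]
  exact Finset.sum_congr rfl fun j _ => by ring

theorem traceAncilla_kronecker_indexPerm_one_zero :
    traceAncilla ((ρ ⊗ₖ (σ ⊗ₖ τ)).submatrix (indexPerm n) (indexPerm n)) 1 0 =
      τ 1 0 • (σ * ρ) := by
  ext i i'
  simp only [traceAncilla, of_apply, submatrix_apply, indexPerm_zero, indexPerm_one,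
    kronecker_apply, Matrix.smul_apply, smul_eq_mul, mul_apply, Finset.mul_sum]
  exact Finset.sum_congr rfl fun j _ => by ring

theorem traceAncilla_kronecker_indexPerm_one_one :
    traceAncilla ((ρ ⊗ₖ (σ ⊗ₖ τ)).submatrix (indexPerm n) (indexPerm n)) 1 1 =
      τ 1 1 • ρ.trace • σ := by
  ext i i'
  simp only [traceAncilla, of_apply, submatrix_apply, indexPerm_one, kronecker_apply,
    Matrix.smul_apply, smul_eq_mul, trace, diag_apply, Finset.sum_mul, Finset.mul_sum]
  exact Finset.sum_congr rfl fun j _ => by ring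

end ControlledSwap

open ControlledSwap in
theorem stmt_17_general {d : ℕ} (ρ σ : Matrix (Fin d) (Fin d) ℂ)
    (τ : Matrix (Fin 2) (Fin 2) ℂ) :
    (Matrix.of fun i i' : Fin d =>
        (1 / 2 : ℂ) * ∑ c : Fin 2, ∑ c' : Fin 2, ∑ j : Fin d,
          (cswap d * (ρ ⊗ₖ (σ ⊗ₖ τ)) * (cswap d)ᴴ) (i, j, c) (i', j, c')) =
      (1 / 2 : ℂ) • (τ 0 0 • σ.trace • ρ + τ 0 1 • (ρ * σ) + τ 1 0 • (σ * ρ) +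
        τ 1 1 • ρ.trace • σ) := by
  rw [cswap_eq_permMatrix, permMatrix_mul_mul_conjTranspose,
    ← traceAncilla_kronecker_indexPerm_zero_zero,
    ← traceAncilla_kronecker_indexPerm_zero_one, ← traceAncilla_kronecker_indexPerm_one_zero,
    ← traceAncilla_kronecker_indexPerm_one_one]
  ext i i'
  simp [traceAncilla, Fin.sum_univ_two, add_assoc]

theorem stmt_17 {d : ℕ} (ρ₀ P : Matrix (Fin d) (Fin d) ℂ) (htr0 : ρ₀.trace = 1)
    (hPh : P.IsHermitian) (hPp : P * P = P) (htrP : P.trace = 1) (η : ℝ) :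
    (Matrix.of fun i i' : Fin d =>
        (1 / 2 : ℂ) * ∑ c : Fin 2, ∑ c' : Fin 2, ∑ j : Fin d,
          (cswap d *
              Matrix.kroneckerMap (· * ·) ρ₀
                (Matrix.kroneckerMap (· * ·) P
                  (vecMulVec ![1, -(η : ℂ)] (star ![1, -(η : ℂ)]))) *
              (cswap d)ᴴ)
            (i, j, c) (i', j, c'))
      = (1 / 2 : ℂ) • (ρ₀ - η • (ρ₀ * P + P * ρ₀) + η ^ 2 • P) := by
  rw [stmt_17_general, htr0, htrP]
  simp only [vecMulVec_apply, Pi.star_apply, cons_val_zero, cons_val_one, star_one, star_neg,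
    Complex.star_def, Complex.conj_ofReal, ← Complex.coe_smul]
  module
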